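/- arXiv:2210.06692 — 2 statements merged into one kernel-verified Lean document; each statement's English description precedes it below -/
import Mathlib

section
/- (Theorem 3, third bullet) For any integer N ≥ 1, the fixed points satisfy Q^π_{N,N}(s,a) ≤ Q^π_{N+1,N+1}(s,a) for all (s,a); that is, Q^π_{N,N} element-wise increases with N. -/
/-!
Adjoining one more sample to a tuple moves its `k`-th smallest entry to position at most `k + 1`,
so the `(N, k)` operator lies pointwise below the `(N + 1, k + 1)` operator; `k = N` is the case of
maxima. Both operators are monotone, and adding a constant to `Q` adds `γ` times it to the image.
So if `D` is the largest value of `Q₁ - Q₂` for a subsolution `Q₁` and a supersolution `Q₂`, then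
`Q₁ ≤ Q₂ + D` yields `D ≤ γ * D`, hence `D ≤ 0`.
-/

/-- `kmin x k` is the entry in position `k` (0-indexed) of a monotone nondecreasing
sorted arrangement of the tuple `x`, i.e. the `(k+1)`-th smallest entry counted with
multiplicity. -/
noncomputable def kmin {N : ℕ} (x : Fin N → ℝ) (k : Fin N) : ℝ := x (Tuple.sort x k)

/-- A probability mass function on a finite type: nonnegative and summing to one. -/
def IsPMF {α : Type*} [Fintype α] (p : α → ℝ) : Prop :=
  (∀ a, 0 ≤ p a) ∧ ∑ a, p a = 1

/-- Sup norm `‖Q‖_∞ = max_{(s,a)} |Q(s,a)|` on `S × A → ℝ` (curried). -/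
noncomputable def supNorm {S A : Type*} [Fintype S] [Fintype A] [Nonempty S] [Nonempty A]
    (Q : S → A → ℝ) : ℝ :=
  Finset.univ.sup' Finset.univ_nonempty (fun p : S × A => |Q p.1 p.2|)

/-- The `(N,k)`-pessimistic Bellman operator (with `k` given 0-indexed as `k : Fin N`):
`(B^π_{N,k} Q)(s,a) = r(s,a) + γ · Σ_{v : Fin N → ι} (Π_j P(v_j)) ·
  kmin_k( j ↦ Σ_{s'} M(v_j)(s,a)(s') · Σ_{a'} π(a'|s') · Q(s',a') )`. -/
noncomputable def pessBellman {S A ι : Type*} [Fintype S] [Fintype A] [Fintype ι]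
    (r : S → A → ℝ) (γ : ℝ) (P : ι → ℝ) (M : ι → S → A → S → ℝ)
    (π : S → A → ℝ) (N : ℕ) (k : Fin N) (Q : S → A → ℝ) : S → A → ℝ :=
  fun s a => r s a + γ * ∑ v : Fin N → ι, (∏ j, P (v j)) *
    kmin (fun j => ∑ s', M (v j) s a s' * ∑ a', π s' a' * Q s' a') k

section OrderStatistic

variable {N : ℕ}

theorem kmin_le_iff {x : Fin N → ℝ} {k : Fin N} {c : ℝ} :
    kmin x k ≤ c ↔ (k : ℕ) < Finset.card {j | x j ≤ c} := by
  have card_sorted : Finset.card {j | x (Tuple.sort x j) ≤ c} = Finset.card {j | x j ≤ c} :=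
    Finset.card_equiv (Tuple.sort x) (by simp)
  rw [← card_sorted]
  exact (Tuple.lt_card_le_iff_apply_le_of_monotone (Tuple.monotone_sort x)).symm

theorem kmin_mono (k : Fin N) : Monotone fun x : Fin N → ℝ => kmin x k := by
  intro x y hxy
  have hcard : (k : ℕ) < Finset.card {j | y j ≤ kmin y k} := kmin_le_iff.1 le_rfl
  refine kmin_le_iff.2 (hcard.trans_le (Finset.card_le_card ?_))
  exact Finset.monotone_filter_right _ fun j _ hj => (hxy j).trans hj

theorem kmin_add_const (x : Fin N → ℝ) (c : ℝ) (k : Fin N) :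
    kmin (fun j => x j + c) k = kmin x k + c :=
  eq_of_forall_ge_iff fun b => by simp only [kmin_le_iff, ← le_sub_iff_add_le]

theorem kmin_tail_le_kmin_succ (x : Fin (N + 1) → ℝ) (k : Fin N) :
    kmin (Fin.tail x) k ≤ kmin x k.succ := by
  have hcard : (k : ℕ) + 1 < Finset.card {j | x j ≤ kmin x k.succ} :=
    kmin_le_iff (k := k.succ).1 le_rfl
  have card_le (c : ℝ) :
      Finset.card {j | x j ≤ c} ≤ Finset.card {j | Fin.tail x j ≤ c} + 1 := by
    rw [Fin.card_filter_univ_succ]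
    split_ifs
    · exact le_rfl
    · exact Nat.le_succ _
  exact kmin_le_iff.2 (Nat.lt_of_succ_lt_succ (hcard.trans_le (card_le _)))

end OrderStatistic

section ExpectedOrderStatistic

variable {ι : Type*} [Fintype ι] {P : ι → ℝ} {N : ℕ}

/-- The expected order statistic in position `k` (0-indexed) of the values under `x` of `N`
independent samples from `P`. -/
noncomputable def expectedKmin (P : ι → ℝ) (k : Fin N) (x : ι → ℝ) : ℝ :=
  ∑ v : Fin N → ι, (∏ j, P (v j)) * kmin (fun j => x (v j)) k

theorem expectedKmin_mono (hP : ∀ i, 0 ≤ P i) (k : Fin N) : Monotone (expectedKmin P k) := by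
  intro x y hxy
  refine Finset.sum_le_sum fun v _ => mul_le_mul_of_nonneg_left ?_ ?_
  · exact kmin_mono k fun j => hxy (v j)
  · exact Finset.prod_nonneg fun j _ => hP (v j)

theorem expectedKmin_add_const (hP : ∑ i, P i = 1) (k : Fin N) (x : ι → ℝ) (c : ℝ) :
    expectedKmin P k (fun i => x i + c) = expectedKmin P k x + c := by
  have sum_prod : ∑ v : Fin N → ι, ∏ j, P (v j) = 1 := by
    rw [← Fintype.sum_pow, hP, one_pow]
  simp only [expectedKmin, kmin_add_const, mul_add, Finset.sum_add_distrib, ← Finset.sum_mul,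
    sum_prod, one_mul]

theorem sum_prod_mul_tail (hP : ∑ i, P i = 1) (f : (Fin N → ι) → ℝ) :
    ∑ w : Fin (N + 1) → ι, (∏ j, P (w j)) * f (Fin.tail w) =
      ∑ v : Fin N → ι, (∏ j, P (v j)) * f v := by
  calc ∑ w : Fin (N + 1) → ι, (∏ j, P (w j)) * f (Fin.tail w)
      = ∑ p : ι × (Fin N → ι), (∏ j, P (Fin.cons (α := fun _ => ι) p.1 p.2 j)) * f p.2 :=
        ((Fin.consEquiv fun _ : Fin (N + 1) => ι).sum_comp _).symm
    _ = ∑ i, P i * ∑ v : Fin N → ι, (∏ j, P (v j)) * f v := by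
        simp only [Fintype.sum_prod_type, Fin.prod_univ_succ, Fin.cons_zero, Fin.cons_succ,
          mul_assoc, Finset.mul_sum]
    _ = ∑ v : Fin N → ι, (∏ j, P (v j)) * f v := by rw [← Finset.sum_mul, hP, one_mul]

theorem expectedKmin_le_expectedKmin_succ (hP : IsPMF P) (k : Fin N) (x : ι → ℝ) :
    expectedKmin P k x ≤ expectedKmin P k.succ x := by
  calc expectedKmin P k x
      = ∑ w : Fin (N + 1) → ι, (∏ j, P (w j)) * kmin (fun j => x (Fin.tail w j)) k :=
        (sum_prod_mul_tail hP.2 fun v => kmin (fun j => x (v j)) k).symm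
    _ ≤ expectedKmin P k.succ x :=
        Finset.sum_le_sum fun w _ => mul_le_mul_of_nonneg_left
          (kmin_tail_le_kmin_succ (fun j => x (w j)) k) (Finset.prod_nonneg fun j _ => hP.1 (w j))

end ExpectedOrderStatistic

section BellmanOperator

variable {S A ι : Type*} [Fintype S] [Fintype A] {π : S → A → ℝ} {m : S → ℝ}

/-- The expected value of `Q` at the next state, drawn from `m`, and the action which the
policy `π` takes there. -/
def expectedNextValue (π : S → A → ℝ) (m : S → ℝ) (Q : S → A → ℝ) : ℝ :=
  ∑ s, m s * ∑ a, π s a * Q s a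

theorem expectedNextValue_mono (hπ : ∀ s a, 0 ≤ π s a) (hm : ∀ s, 0 ≤ m s) :
    Monotone (expectedNextValue π m) := fun _ _ hQ =>
  Finset.sum_le_sum fun s _ => mul_le_mul_of_nonneg_left
    (Finset.sum_le_sum fun a _ => mul_le_mul_of_nonneg_left (hQ s a) (hπ s a)) (hm s)

theorem expectedNextValue_add_const (hπ : ∀ s, ∑ a, π s a = 1) (hm : ∑ s, m s = 1)
    (Q : S → A → ℝ) (c : ℝ) :
    expectedNextValue π m (fun s a => Q s a + c) = expectedNextValue π m Q + c := by
  simp only [expectedNextValue, mul_add, Finset.sum_add_distrib, ← Finset.sum_mul, hπ, hm, one_mul]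

variable [Fintype ι] {r : S → A → ℝ} {γ : ℝ} {P : ι → ℝ} {M : ι → S → A → S → ℝ} {N : ℕ}
  {k : Fin N} {Q Q' : S → A → ℝ}

theorem pessBellman_apply (s : S) (a : A) :
    pessBellman r γ P M π N k Q s a =
      r s a + γ * expectedKmin P k fun i => expectedNextValue π (M i s a) Q :=
  rfl

theorem pessBellman_mono (hγ : 0 ≤ γ) (hπ : ∀ s a, 0 ≤ π s a) (hP : ∀ i, 0 ≤ P i)
    (hM : ∀ i s a s', 0 ≤ M i s a s') : Monotone (pessBellman r γ P M π N k) := by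
  intro Q Q' hQ s a
  simp only [pessBellman_apply]
  gcongr
  exact expectedKmin_mono hP k fun i => expectedNextValue_mono hπ (hM i s a) hQ

theorem pessBellman_add_const (hπ : ∀ s, ∑ a, π s a = 1) (hP : ∑ i, P i = 1)
    (hM : ∀ i s a, ∑ s', M i s a s' = 1) (c : ℝ) (s : S) (a : A) :
    pessBellman r γ P M π N k (fun s a => Q s a + c) s a =
      pessBellman r γ P M π N k Q s a + γ * c := by
  simp only [pessBellman_apply, expectedNextValue_add_const hπ (hM _ s a),
    expectedKmin_add_const hP, mul_add, add_assoc]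

theorem pessBellman_le_pessBellman_succ (hγ : 0 ≤ γ) (hP : IsPMF P) :
    pessBellman r γ P M π N k Q ≤ pessBellman r γ P M π (N + 1) k.succ Q := by
  intro s a
  simp only [pessBellman_apply]
  gcongr
  exact expectedKmin_le_expectedKmin_succ hP k _

theorem le_of_le_pessBellman_of_pessBellman_le (hγ0 : 0 ≤ γ) (hγ1 : γ < 1)
    (hπ : ∀ s, IsPMF (π s)) (hP : IsPMF P) (hM : ∀ i s a, IsPMF (M i s a))
    (hQ : Q ≤ pessBellman r γ P M π N k Q) (hQ' : pessBellman r γ P M π N k Q' ≤ Q') :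
    Q ≤ Q' := by
  intro s a
  have : Nonempty (S × A) := ⟨(s, a)⟩
  obtain ⟨⟨s₀, a₀⟩, hmax⟩ := Finite.exists_max fun p : S × A => Q p.1 p.2 - Q' p.1 p.2
  set D := Q s₀ a₀ - Q' s₀ a₀
  have hQD : ∀ s a, Q s a ≤ Q' s a + D := fun s a => sub_le_iff_le_add'.1 (hmax (s, a))
  have hstep : Q s₀ a₀ ≤ Q' s₀ a₀ + γ * D := by
    calc Q s₀ a₀ ≤ pessBellman r γ P M π N k Q s₀ a₀ := hQ s₀ a₀
      _ ≤ pessBellman r γ P M π N k (fun s a => Q' s a + D) s₀ a₀ :=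
          pessBellman_mono hγ0 (fun s => (hπ s).1) hP.1 (fun i s a => (hM i s a).1) hQD s₀ a₀
      _ = pessBellman r γ P M π N k Q' s₀ a₀ + γ * D :=
          pessBellman_add_const (fun s => (hπ s).2) hP.2 (fun i s a => (hM i s a).2) D s₀ a₀
      _ ≤ Q' s₀ a₀ + γ * D := by gcongr; exact hQ' s₀ a₀
  have hD_nonpos : D ≤ 0 := by nlinarith
  linarith [hQD s a]

theorem pessBellman_fixedPoint_mono_NN_general (hγ0 : 0 ≤ γ) (hγ1 : γ < 1)
    (hπ : ∀ s, IsPMF (π s)) (hP : IsPMF P) (hM : ∀ i s a, IsPMF (M i s a))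
    (hQ : Q ≤ pessBellman r γ P M π N k Q)
    (hQ' : pessBellman r γ P M π (N + 1) k.succ Q' ≤ Q') : Q ≤ Q' :=
  le_of_le_pessBellman_of_pessBellman_le hγ0 hγ1 hπ hP hM hQ
    ((pessBellman_le_pessBellman_succ hγ0 hP).trans hQ')

end BellmanOperator

/-- Theorem 3, third bullet: the fixed points of the `(N,N)`- and
`(N+1,N+1)`-pessimistic Bellman operators satisfy
`Q^π_{N,N}(s,a) ≤ Q^π_{N+1,N+1}(s,a)` for all `(s,a)`. -/
theorem pessBellman_fixedPoint_mono_NN {S A ι : Type*} [Fintype S] [Fintype A] [Fintype ι]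
    (r : S → A → ℝ) (γ : ℝ) (hγ0 : 0 ≤ γ) (hγ1 : γ < 1)
    (π : S → A → ℝ) (hπ : ∀ s, IsPMF (π s))
    (P : ι → ℝ) (hP : IsPMF P)
    (M : ι → S → A → S → ℝ) (hM : ∀ v s a, IsPMF (M v s a))
    (N : ℕ) (hN : 1 ≤ N)
    (Q1 Q2 : S → A → ℝ)
    (hQ1 : pessBellman r γ P M π N ⟨N - 1, by omega⟩ Q1 = Q1)
    (hQ2 : pessBellman r γ P M π (N + 1) ⟨N + 1 - 1, by omega⟩ Q2 = Q2) :
    ∀ s a, Q1 s a ≤ Q2 s a := by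
  cases N with
  | zero => omega
  | succ n => exact pessBellman_fixedPoint_mono_NN_general hγ0 hγ1 hπ hP hM hQ1.ge hQ2.le
end

section
/- (Theorem 6, Policy Evaluation for the KL-Regularized Game) The regularized (N,k)-pessimistic evaluation operator is a γ-contraction for the sup norm: for all Q1, Q2 : S × A → ℝ, ‖B̄^π_{N,k;μ} Q1 − B̄^π_{N,k;μ} Q2‖_∞ ≤ γ · ‖Q1 − Q2‖_∞; consequently it has a unique fixed point Q̄^π_{N,k;μ}, to which the iterates from any starting point converge in sup norm. -/
/-- Kullback–Leibler divergence `KL(p‖q) = Σ_a p(a)·log(p(a)/q(a))` on a finite type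
(with the convention `0·log 0 = 0`, automatic here). -/
noncomputable def KLdiv {α : Type*} [Fintype α] (p q : α → ℝ) : ℝ :=
  ∑ a, p a * Real.log (p a / q a)

/-- The soft `(N,k)`-pessimistic Bellman operator with reference policy `μ` and
coefficient `α` (with `k` given 0-indexed as `k : Fin N`):
`(B̄*_{N,k;μ} Q)(s,a) = r(s,a) + γ · Σ_{v} (Π_j P(v_j)) ·
  kmin_k( j ↦ Σ_{s'} M(v_j)(s,a)(s') · α·log Σ_{a'} μ(a'|s')·exp(Q(s',a')/α) )`. -/
noncomputable def softBellman {S A ι : Type*} [Fintype S] [Fintype A] [Fintype ι]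
    (r : S → A → ℝ) (γ : ℝ) (P : ι → ℝ) (M : ι → S → A → S → ℝ)
    (μ : S → A → ℝ) (α : ℝ) (N : ℕ) (k : Fin N) (Q : S → A → ℝ) : S → A → ℝ :=
  fun s a => r s a + γ * ∑ v : Fin N → ι, (∏ j, P (v j)) *
    kmin (fun j => ∑ s', M (v j) s a s' *
      (α * Real.log (∑ a', μ s' a' * Real.exp (Q s' a' / α)))) k

/-- The regularized `(N,k)`-pessimistic evaluation operator for policy `π`, reference
policy `μ` and coefficient `α` (with `k` given 0-indexed as `k : Fin N`):
`(B̄^π_{N,k;μ} Q)(s,a) = r(s,a) + γ · Σ_{v} (Π_j P(v_j)) ·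
  kmin_k( j ↦ Σ_{s'} M(v_j)(s,a)(s') · (Σ_{a'} π(a'|s')·Q(s',a') − α·KL(π(·|s')‖μ(·|s'))) )`. -/
noncomputable def regBellman {S A ι : Type*} [Fintype S] [Fintype A] [Fintype ι]
    (r : S → A → ℝ) (γ : ℝ) (P : ι → ℝ) (M : ι → S → A → S → ℝ)
    (π μ : S → A → ℝ) (α : ℝ) (N : ℕ) (k : Fin N) (Q : S → A → ℝ) : S → A → ℝ :=
  fun s a => r s a + γ * ∑ v : Fin N → ι, (∏ j, P (v j)) *
    kmin (fun j => ∑ s', M (v j) s a s' *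
      ((∑ a', π s' a' * Q s' a') - α * KLdiv (π s') (μ s'))) k

/-!
Averaging against a probability mass function and taking the `k`-th smallest entry are both
`1`-Lipschitz for the sup norm, so discounting a composition of such maps by `γ` gives a
`γ`-Lipschitz map, and the rest is Banach's fixed-point theorem. The order statistic is
nonexpansive because `kmin x k ≤ t` only says that more than `k` entries of `x` are at most `t`
(`k` being 0-indexed), and raising every entry by at most `c` leaves these entries at most `t + c`.
-/

open Finset
open scoped NNReal

theorem lipschitzWith_of_forall_apply {X κ : Type*} {E : κ → Type*} [PseudoEMetricSpace X]
    [Fintype κ] [∀ i, PseudoEMetricSpace (E i)] {K : ℝ≥0} {f : X → ∀ i, E i}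
    (hf : ∀ i, LipschitzWith K fun x => f x i) : LipschitzWith K f :=
  fun x y => edist_pi_le_iff.2 fun i => hf i x y

theorem le_add_dist_apply {κ : Type*} [Fintype κ] (x y : κ → ℝ) (i : κ) :
    x i ≤ y i + dist x y :=
  sub_le_iff_le_add'.1 ((le_abs_self _).trans (dist_le_pi_dist x y i))

section OrderStatistic

variable {N : ℕ}

theorem kmin_le_iff_lt_card {x : Fin N → ℝ} {k : Fin N} {t : ℝ} :
    kmin x k ≤ t ↔ k < #{i | x i ≤ t} := by
  have card_sorted : #{i | (x ∘ Tuple.sort x) i ≤ t} = #{i | x i ≤ t} :=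
    card_equiv (Tuple.sort x) (by simp)
  rw [← card_sorted, Tuple.lt_card_le_iff_apply_le_of_monotone (Tuple.monotone_sort x)]
  rfl

theorem kmin_le_kmin_add {x y : Fin N → ℝ} {c : ℝ} (h : ∀ i, x i ≤ y i + c) (k : Fin N) :
    kmin x k ≤ kmin y k + c := by
  rw [kmin_le_iff_lt_card]
  have many_small : k < #{i | y i ≤ kmin y k} := kmin_le_iff_lt_card.1 le_rfl
  exact many_small.trans_le <| card_le_card <| monotone_filter_right univ fun i _ hi =>
    (h i).trans (by gcongr)

theorem lipschitzWith_kmin (k : Fin N) : LipschitzWith 1 fun x : Fin N → ℝ => kmin x k :=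
  LipschitzWith.of_le_add fun x y => kmin_le_kmin_add (le_add_dist_apply x y) k

end OrderStatistic

namespace IsPMF

theorem sum_mul_le_sum_mul_add {β : Type*} [Fintype β] {p : β → ℝ} (hp : IsPMF p) {f g : β → ℝ}
    {c : ℝ} (h : ∀ b, f b ≤ g b + c) : ∑ b, p b * f b ≤ ∑ b, p b * g b + c :=
  calc ∑ b, p b * f b ≤ ∑ b, p b * (g b + c) :=
        sum_le_sum fun b _ => mul_le_mul_of_nonneg_left (h b) (hp.1 b)
    _ = ∑ b, p b * g b + c := by
        simp only [mul_add, sum_add_distrib, ← sum_mul, hp.2, one_mul]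

theorem lipschitzWith_sum_mul {β : Type*} [Fintype β] {p : β → ℝ} (hp : IsPMF p) :
    LipschitzWith 1 fun f : β → ℝ => ∑ b, p b * f b :=
  LipschitzWith.of_le_add fun f g => hp.sum_mul_le_sum_mul_add (le_add_dist_apply f g)

theorem pi {κ : Type*} {β : κ → Type*} [Fintype κ] [DecidableEq κ] [∀ i, Fintype (β i)]
    {p : ∀ i, β i → ℝ} (hp : ∀ i, IsPMF (p i)) :
    IsPMF fun v : ∀ i, β i => ∏ i, p i (v i) :=
  ⟨fun v => prod_nonneg fun i _ => (hp i).1 (v i), by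
    simp only [← Fintype.prod_sum, (hp _).2, prod_const_one]⟩

end IsPMF

section Backup

variable {S A ι : Type*}

/-- The `(N,k)`-pessimistic backup of a state-value function `V`: the part of the pessimistic
Bellman operators that does not depend on how the value of a state is computed from `Q`. As in
`regBellman`, the order `k` is 0-indexed. -/
noncomputable def pessBackup [Fintype S] [Fintype ι] (r : S → A → ℝ) (γ : ℝ) (P : ι → ℝ)
    (M : ι → S → A → S → ℝ) {N : ℕ} (k : Fin N) (V : S → ℝ) : S → A → ℝ :=
  fun s a => r s a + γ * ∑ v : Fin N → ι, (∏ j, P (v j)) *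
    kmin (fun j => ∑ s', M (v j) s a s' * V s') k

/-- The state value of the policy `π` under the action values `Q`, less a penalty `Ω s` in each
state `s`; the KL-regularized value is the case `Ω s = α * KLdiv (π s) (μ s)`. -/
noncomputable def penalizedValue [Fintype A] (π : S → A → ℝ) (Ω : S → ℝ) (Q : S → A → ℝ) :
    S → ℝ :=
  fun s => ∑ a, π s a * Q s a - Ω s

variable [Fintype S] [Fintype A] [Fintype ι]

theorem regBellman_eq_pessBackup_penalizedValue (r : S → A → ℝ) (γ : ℝ) (P : ι → ℝ)
    (M : ι → S → A → S → ℝ) (π μ : S → A → ℝ) (α : ℝ) {N : ℕ} (k : Fin N) :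
    regBellman r γ P M π μ α N k =
      fun Q => pessBackup r γ P M k (penalizedValue π (fun s => α * KLdiv (π s) (μ s)) Q) :=
  rfl

theorem lipschitzWith_pessBackup (r : S → A → ℝ) (γ : ℝ) {P : ι → ℝ} (hP : IsPMF P)
    {M : ι → S → A → S → ℝ} (hM : ∀ v s a, IsPMF (M v s a)) {N : ℕ} (k : Fin N) :
    LipschitzWith ‖γ‖₊ (pessBackup r γ P M k) := by
  refine lipschitzWith_of_forall_apply fun s => lipschitzWith_of_forall_apply fun a => ?_
  have pessimistic_value (v : Fin N → ι) :
      LipschitzWith 1 fun V : S → ℝ => kmin (fun j => ∑ s', M (v j) s a s' * V s') k := by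
    simpa only [one_mul, Function.comp_def] using
      (lipschitzWith_kmin k).comp
        (lipschitzWith_of_forall_apply fun j => (hM (v j) s a).lipschitzWith_sum_mul)
  have expected_value :
      LipschitzWith 1 fun V : S → ℝ => ∑ v : Fin N → ι, (∏ j, P (v j)) *
        kmin (fun j => ∑ s', M (v j) s a s' * V s') k := by
    simpa only [one_mul, Function.comp_def] using
      (IsPMF.pi fun _ : Fin N => hP).lipschitzWith_sum_mul.comp
        (lipschitzWith_of_forall_apply pessimistic_value)
  simpa only [pessBackup, zero_add, mul_one, Function.comp_def, smul_eq_mul] using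
    (LipschitzWith.const (r s a)).add ((lipschitzWith_smul γ).comp expected_value)

theorem lipschitzWith_penalizedValue {π : S → A → ℝ} (hπ : ∀ s, IsPMF (π s)) (Ω : S → ℝ) :
    LipschitzWith 1 (penalizedValue π Ω) :=
  lipschitzWith_of_forall_apply fun s => by
    simpa only [penalizedValue, one_mul, add_zero, Function.comp_def] using
      ((hπ s).lipschitzWith_sum_mul.comp (LipschitzWith.eval s)).sub (LipschitzWith.const (Ω s))

theorem contractingWith_pessBackup_comp (r : S → A → ℝ) {γ : ℝ≥0} (hγ : γ < 1)
    {P : ι → ℝ} (hP : IsPMF P) {M : ι → S → A → S → ℝ} (hM : ∀ v s a, IsPMF (M v s a))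
    {N : ℕ} (k : Fin N) {V : (S → A → ℝ) → S → ℝ} (hV : LipschitzWith 1 V) :
    ContractingWith γ fun Q => pessBackup r γ P M k (V Q) :=
  ⟨hγ, by simpa only [NNReal.nnnorm_eq, mul_one, Function.comp_def] using
    (lipschitzWith_pessBackup r γ hP hM k).comp hV⟩

variable [Nonempty S] [Nonempty A]

theorem supNorm_eq_norm (Q : S → A → ℝ) : supNorm Q = ‖Q‖ :=
  eq_of_forall_ge_iff fun c => by simp [supNorm, pi_norm_le_iff_of_nonempty]

theorem supNorm_sub_eq_dist (Q₁ Q₂ : S → A → ℝ) :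
    supNorm (fun s a => Q₁ s a - Q₂ s a) = dist Q₁ Q₂ :=
  (supNorm_eq_norm (Q₁ - Q₂)).trans (dist_eq_norm Q₁ Q₂).symm

theorem regBellman_contraction_general (r : S → A → ℝ) (γ : ℝ) (hγ0 : 0 ≤ γ) (hγ1 : γ < 1)
    {P : ι → ℝ} (hP : IsPMF P) {M : ι → S → A → S → ℝ} (hM : ∀ v s a, IsPMF (M v s a))
    {N : ℕ} (k : Fin N) {V : (S → A → ℝ) → S → ℝ} (hV : LipschitzWith 1 V) :
    (∀ Q₁ Q₂ : S → A → ℝ,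
      supNorm (fun s a => pessBackup r γ P M k (V Q₁) s a - pessBackup r γ P M k (V Q₂) s a)
        ≤ γ * supNorm (fun s a => Q₁ s a - Q₂ s a)) ∧
    (∃! Qfix : S → A → ℝ, pessBackup r γ P M k (V Qfix) = Qfix) ∧
    (∀ Qfix : S → A → ℝ, pessBackup r γ P M k (V Qfix) = Qfix →
      ∀ Q : S → A → ℝ,
        Filter.Tendsto
          (fun n => supNorm
            (fun s a => (fun Q' => pessBackup r γ P M k (V Q'))^[n] Q s a - Qfix s a))
          Filter.atTop (nhds 0)) := by
  lift γ to ℝ≥0 using hγ0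
  have contracting := contractingWith_pessBackup_comp r (mod_cast hγ1) hP hM k hV
  simp only [supNorm_sub_eq_dist]
  refine ⟨contracting.dist_le_mul,
    ⟨_, contracting.fixedPoint_isFixedPt, fun _ => contracting.fixedPoint_unique⟩,
    fun Qfix hfix Q => ?_⟩
  rw [contracting.fixedPoint_unique hfix]
  exact tendsto_iff_dist_tendsto_zero.1 (contracting.tendsto_iterate_fixedPoint Q)

end Backup

/-- Theorem 6 (Policy Evaluation for the KL-Regularized Game): the regularized
`(N,k)`-pessimistic evaluation operator is a `γ`-contraction for the sup norm;
consequently it has a unique fixed point, to which the iterates from any starting point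
converge in sup norm. -/
theorem regBellman_contraction {S A ι : Type*} [Fintype S] [Fintype A] [Fintype ι]
    [Nonempty S] [Nonempty A] [Nonempty ι]
    (r : S → A → ℝ) (γ : ℝ) (hγ0 : 0 ≤ γ) (hγ1 : γ < 1)
    (π : S → A → ℝ) (hπ : ∀ s, IsPMF (π s))
    (μ : S → A → ℝ) (hμ : ∀ s, IsPMF (μ s)) (hμpos : ∀ s a, 0 < μ s a)
    (α : ℝ) (hα : 0 < α)
    (P : ι → ℝ) (hP : IsPMF P)
    (M : ι → S → A → S → ℝ) (hM : ∀ v s a, IsPMF (M v s a))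
    (N : ℕ) (hN : 1 ≤ N) (k : ℕ) (hk1 : 1 ≤ k) (hkN : k ≤ N) :
    (∀ Q1 Q2 : S → A → ℝ,
      supNorm (fun s a => regBellman r γ P M π μ α N ⟨k - 1, by omega⟩ Q1 s a
          - regBellman r γ P M π μ α N ⟨k - 1, by omega⟩ Q2 s a)
        ≤ γ * supNorm (fun s a => Q1 s a - Q2 s a)) ∧
    (∃! Qfix : S → A → ℝ, regBellman r γ P M π μ α N ⟨k - 1, by omega⟩ Qfix = Qfix) ∧
    (∀ Qfix : S → A → ℝ, regBellman r γ P M π μ α N ⟨k - 1, by omega⟩ Qfix = Qfix →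
      ∀ Q : S → A → ℝ,
        Filter.Tendsto
          (fun n => supNorm
            (fun s a => (regBellman r γ P M π μ α N ⟨k - 1, by omega⟩)^[n] Q s a - Qfix s a))
          Filter.atTop (nhds 0)) := by
  simp only [regBellman_eq_pessBackup_penalizedValue]
  exact regBellman_contraction_general r γ hγ0 hγ1 hP hM _ (lipschitzWith_penalizedValue hπ _)
end
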